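/- Let x₁, x₂, x₃, x₄ ∈ ℝ² be the nodes of a (possibly concave, tangled) bilinear quadrilateral element with isoparametric map φ. Suppose two distinct parametric points ξ⁺, ξ⁻ ∈ [−1,1]² are mapped to the same physical point, φ(ξ⁺) = φ(ξ⁻) (a point of the fold). If the nodal values are sampled from an affine map L : ℝ² → ℝ², i.e. ûᵢ = L(xᵢ), then the two branch values of the interpolated field agree at that point: Σᵢ Nᵢ(ξ⁺) ûᵢ = Σᵢ Nᵢ(ξ⁻) ûᵢ. (Thus the piecewise compatibility constraint ⟦u⟧ = 0 of i-TFEM is automatically satisfied by all affine fields, so enforcing it does not preclude capturing constant strain states.) -/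

import Mathlib

/-- Bilinear shape functions on the reference square `[-1,1]²`. -/
noncomputable def N1 (ξ η : ℝ) : ℝ := (1 - ξ) * (1 - η) / 4
noncomputable def N2 (ξ η : ℝ) : ℝ := (1 + ξ) * (1 - η) / 4
noncomputable def N3 (ξ η : ℝ) : ℝ := (1 + ξ) * (1 + η) / 4
noncomputable def N4 (ξ η : ℝ) : ℝ := (1 - ξ) * (1 + η) / 4

/-- Isoparametric bilinear map of the Q4 element with nodes `x₁, x₂, x₃, x₄ ∈ ℝ²`. -/
noncomputable def bilinearMap (x1 x2 x3 x4 : Fin 2 → ℝ) (p : ℝ × ℝ) : Fin 2 → ℝ :=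
  N1 p.1 p.2 • x1 + N2 p.1 p.2 • x2 + N3 p.1 p.2 • x3 + N4 p.1 p.2 • x4

/-- Q4 interpolant of nodal values `û₁, û₂, û₃, û₄` at a parametric point. -/
noncomputable def q4Interp (u1 u2 u3 u4 : Fin 2 → ℝ) (p : ℝ × ℝ) : Fin 2 → ℝ :=
  N1 p.1 p.2 • u1 + N2 p.1 p.2 • u2 + N3 p.1 p.2 • u3 + N4 p.1 p.2 • u4

/-!
The shape functions sum to one, so the element map and the interpolant are affine combinations of
the nodes and of the nodal values with the same weights. Affine maps preserve affine combinations,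
so the field interpolating an affine `L` is `L ∘ φ`, which depends on a parametric point only
through its image under the element map `φ`.
-/

section AffineCombination

variable {ι k V W : Type*} [Ring k] [AddCommGroup V] [Module k V] [AddCommGroup W] [Module k W]

theorem affineMap_sum_smul_of_sum_eq_one (L : V →ᵃ[k] W) (s : Finset ι) (w : ι → k) (x : ι → V)
    (hw : ∑ i ∈ s, w i = 1) : L (∑ i ∈ s, w i • x i) = ∑ i ∈ s, w i • L (x i) := by
  rw [← s.affineCombination_eq_linear_combination x w hw, s.map_affineCombination x w hw,
    s.affineCombination_eq_linear_combination _ w hw]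
  rfl

end AffineCombination

theorem exists_affineMap_coe_eq_of_eq_mulVec_add {m n R : Type*} [CommRing R] [Fintype n]
    {A : Matrix m n R} {b : m → R} {L : (n → R) → m → R} (hL : ∀ x, L x = A.mulVec x + b) :
    ∃ T : (n → R) →ᵃ[R] (m → R), ⇑T = L :=
  ⟨A.mulVecLin.toAffineMap + AffineMap.const R (n → R) b, funext fun x => (hL x).symm⟩

/-- The four Q4 shape functions at a parametric point, as a family of weights on the nodes; node
`xᵢ` of the element has index `i - 1`. -/
noncomputable def q4Shape (p : ℝ × ℝ) : Fin 4 → ℝ :=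
  ![N1 p.1 p.2, N2 p.1 p.2, N3 p.1 p.2, N4 p.1 p.2]

theorem sum_q4Shape (p : ℝ × ℝ) : ∑ i, q4Shape p i = 1 := by
  simp only [q4Shape, Fin.sum_univ_four, Matrix.cons_val, N1, N2, N3, N4]
  ring

section Q4Field

variable {E F : Type*} [AddCommGroup E] [Module ℝ E] [AddCommGroup F] [Module ℝ F]

/-- The Q4 field with nodal data `v` in an arbitrary real vector space. It is the isoparametric map
when `v` lists the nodes and the interpolant when `v` lists the nodal values. -/
noncomputable def q4Field (v : Fin 4 → E) (p : ℝ × ℝ) : E :=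
  ∑ i, q4Shape p i • v i

theorem affineMap_q4Field (L : E →ᵃ[ℝ] F) (x : Fin 4 → E) (p : ℝ × ℝ) :
    L (q4Field x p) = q4Field (L ∘ x) p :=
  affineMap_sum_smul_of_sum_eq_one L Finset.univ (q4Shape p) x (sum_q4Shape p)

theorem affine_field_jump_vanishes_on_fold_general (L : E →ᵃ[ℝ] F) (x : Fin 4 → E)
    {ξp ξm : ℝ × ℝ} (hfold : q4Field x ξp = q4Field x ξm) :
    q4Field (L ∘ x) ξp = q4Field (L ∘ x) ξm := by
  rw [← affineMap_q4Field, hfold, affineMap_q4Field]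

end Q4Field

theorem q4Field_eq_bilinearMap (x : Fin 4 → Fin 2 → ℝ) (p : ℝ × ℝ) :
    q4Field x p = bilinearMap (x 0) (x 1) (x 2) (x 3) p :=
  Fin.sum_univ_four _

theorem q4Field_eq_q4Interp (u : Fin 4 → Fin 2 → ℝ) (p : ℝ × ℝ) :
    q4Field u p = q4Interp (u 0) (u 1) (u 2) (u 3) p :=
  Fin.sum_univ_four _

/-- If two distinct parametric points `ξ⁺ ≠ ξ⁻` of the parametric square are
mapped by a (possibly concave, tangled) Q4 element to the same physical point
(a point of the fold), and the nodal values are sampled from an affine map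
`L(x) = Ax + b`, then the two branch values of the interpolated field agree:
the piecewise compatibility constraint `⟦u⟧ = 0` of i-TFEM is automatically
satisfied by all affine fields. -/
theorem affine_field_jump_vanishes_on_fold (x1 x2 x3 x4 : Fin 2 → ℝ)
    (A : Matrix (Fin 2) (Fin 2) ℝ) (b : Fin 2 → ℝ)
    (L : (Fin 2 → ℝ) → (Fin 2 → ℝ)) (hL : ∀ x, L x = A.mulVec x + b)
    (u1 u2 u3 u4 : Fin 2 → ℝ)
    (hu1 : u1 = L x1) (hu2 : u2 = L x2) (hu3 : u3 = L x3) (hu4 : u4 = L x4)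
    (ξp ξm : ℝ × ℝ)
    (hξp : ξp ∈ Set.Icc ((-1, -1) : ℝ × ℝ) (1, 1))
    (hξm : ξm ∈ Set.Icc ((-1, -1) : ℝ × ℝ) (1, 1))
    (hne : ξp ≠ ξm)
    (hfold : bilinearMap x1 x2 x3 x4 ξp = bilinearMap x1 x2 x3 x4 ξm) :
    q4Interp u1 u2 u3 u4 ξp = q4Interp u1 u2 u3 u4 ξm := by
  obtain ⟨T, rfl⟩ := exists_affineMap_coe_eq_of_eq_mulVec_add hL
  subst hu1 hu2 hu3 hu4
  simpa [q4Field_eq_q4Interp] using affine_field_jump_vanishes_on_fold_general T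
    ![x1, x2, x3, x4] (by simpa [q4Field_eq_bilinearMap] using hfold)
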